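/- Let f : ℝ^{m-1} × ℝ^m → ℝ be continuous and bounded on ℝ^{m-1} × (closed unit ball), such that for each x′ ∈ ℝ^{m-1} the function u ↦ f(x′,u) coincides on the closed unit ball with an element of ℋ_k. Then for every a ∈ ℝ^{m-1} and every v ∈ 𝔹^m, P_H[f](x,v) → f(a,v) as x → (a,0) with x ∈ ℝ^m_+. Consequently, the function g on the closed upper half-space defined by g(x,v) = P_H[f](x,v) for x ∈ ℝ^m_+ and g((x′,0),v) = f(x′,v) is continuous in the x-variable on the closed upper half-space, for each fixed v ∈ 𝔹^m. -/

import Mathlib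

noncomputable section

open MeasureTheory Metric Filter Topology
open scoped RealInnerProductSpace

/-- `ℝ^m` as a Euclidean space. -/
abbrev Evec (m : ℕ) : Type := EuclideanSpace ℝ (Fin m)

/-- Partial derivative in the `i`-th coordinate direction. -/
def pdv {m : ℕ} (i : Fin m) (f : Evec m → ℝ) (x : Evec m) : ℝ :=
  fderiv ℝ f x (EuclideanSpace.single i 1)

/-- Euclidean Laplacian on `ℝ^m`. -/
def lapl {m : ℕ} (f : Evec m → ℝ) (x : Evec m) : ℝ :=
  ∑ i : Fin m, pdv i (pdv i f) x

/-- `p` is a real-valued polynomial function on `ℝ^m`, homogeneous of degree `k` and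
harmonic; i.e. `p ∈ ℋ_k`. -/
def IsHk (m k : ℕ) (p : Evec m → ℝ) : Prop :=
  (∃ P : MvPolynomial (Fin m) ℝ, ∀ x : Evec m, p x = MvPolynomial.eval (fun i => x i) P) ∧
  (∀ (c : ℝ) (x : Evec m), p (c • x) = c ^ k * p x) ∧
  (∀ x : Evec m, lapl p x = 0)

/-- The surface measure `dS` on the unit sphere `𝕊^{m-1}`, as a measure on `ℝ^m`. -/
def sphereM (m : ℕ) : Measure (Evec m) :=
  Measure.map Subtype.val ((volume : Measure (Evec m)).toSphere)

/-- `ω_m`, the surface area of the unit sphere `𝕊^{m-1}`. -/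
def omegaS (m : ℕ) : ℝ := (sphereM m Set.univ).toReal

/-- The constant `c_{m,k} = 2(m+2k-2)/((m-2)ω_m)`. -/
def cmk (m k : ℕ) : ℝ := 2 * ((m : ℝ) + 2 * k - 2) / (((m : ℝ) - 2) * omegaS m)

/-- The reflection `R_a(u) = u - 2⟨a,u⟩a/|a|²` (in Clifford notation `a u a/|a|²`). -/
def reflv {m : ℕ} (a u : Evec m) : Evec m :=
  u - (2 * ⟪a, u⟫ / ‖a‖ ^ 2) • a

/-- `dim ℋ_k`. -/
def hdim (m k : ℕ) : ℕ :=
  Nat.choose (m + k - 1) (m - 1) - Nat.choose (m + k - 3) (m - 1)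

/-- `Z` is the reproducing kernel `Z_k` of `ℋ_k` on the unit sphere: a symmetric,
rotation invariant kernel, bounded by `dim ℋ_k` on the unit ball, belonging to `ℋ_k`
in the first variable and reproducing elements of `ℋ_k` from their spherical values. -/
def IsZk (m k : ℕ) (Z : Evec m → Evec m → ℝ) : Prop :=
  (∀ v : Evec m, IsHk m k (fun u => Z u v)) ∧
  (∀ p : Evec m → ℝ, IsHk m k p → ∀ v : Evec m, (∫ u, Z u v * p u ∂(sphereM m)) = p v) ∧
  (∀ u v : Evec m, Z u v = Z v u) ∧
  (∀ u v : Evec m, ‖u‖ ≤ 1 → ‖v‖ ≤ 1 → |Z u v| ≤ (hdim m k : ℝ)) ∧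
  (∀ (A : Evec m ≃ₗᵢ[ℝ] Evec m) (u v : Evec m), Z (A u) (A v) = Z u v)

/-- The point `(x', y) ∈ ℝ^{d+1}` with first `d` coordinates `x'` and last coordinate `y`. -/
def upP (d : ℕ) (x' : Evec d) (y : ℝ) : Evec (d + 1) :=
  (EuclideanSpace.equiv (Fin (d + 1)) ℝ).symm
    (Fin.snoc (⇑(EuclideanSpace.equiv (Fin d) ℝ) x') y)

/-- The first `d` coordinates of a point of `ℝ^{d+1}`. -/
def downP (d : ℕ) (x : Evec (d + 1)) : Evec d :=
  (EuclideanSpace.equiv (Fin d) ℝ).symm (fun i => x (Fin.castSucc i))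

/-- The last coordinate of a point of `ℝ^{d+1}`. -/
def lastP (d : ℕ) (x : Evec (d + 1)) : ℝ := x (Fin.last d)

/-- The Poisson kernel `P_H` for bosonic Laplacians in the upper half-space `ℝ^{d+1}_+`,
`P_H(x,t,u,v) = c_{m,k} (y/|x-t|^m) Z_k(R_{x-t}(u), v)` with `m = d+1`, `x = (x',y)`,
`t = (t',0)`. -/
def PH (d k : ℕ) (Z : Evec (d + 1) → Evec (d + 1) → ℝ) (x' : Evec d) (y : ℝ)
    (t' : Evec d) (u v : Evec (d + 1)) : ℝ :=
  cmk (d + 1) k * (y / ‖upP d x' y - upP d t' 0‖ ^ (d + 1)) *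
    Z (reflv (upP d x' y - upP d t' 0) u) v

/-- The Poisson integral `P_H[f]` in the upper half-space. -/
def PHint (d k : ℕ) (Z : Evec (d + 1) → Evec (d + 1) → ℝ)
    (f : Evec d → Evec (d + 1) → ℝ) (x' : Evec d) (y : ℝ) (v : Evec (d + 1)) : ℝ :=
  ∫ t' : Evec d, (∫ u, PH d k Z x' y t' u v * f t' u ∂(sphereM (d + 1)))

/-- The Poisson kernel `P_B` for bosonic Laplacians in the unit ball. -/
def PB (m k : ℕ) (Z : Evec m → Evec m → ℝ) (x ζ ω ν : Evec m) : ℝ :=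
  (cmk m k / 2) * ((1 - ‖x‖ ^ 2) / ‖x - ζ‖ ^ m) * Z (reflv (x - ζ) ω) ν

/-- The Poisson integral `P_B[h]` in the unit ball. -/
def PBint (m k : ℕ) (Z : Evec m → Evec m → ℝ) (h : Evec m → Evec m → ℝ)
    (x ν : Evec m) : ℝ :=
  ∫ ζ, (∫ ω, PB m k Z x ζ ω ν * h ζ ω ∂(sphereM m)) ∂(sphereM m)

/-- Partial derivative in the first (`x`) variable. -/
def pd1 {m : ℕ} (i : Fin m) (f : Evec m → Evec m → ℝ) : Evec m → Evec m → ℝ :=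
  fun x u => fderiv ℝ (fun x₁ => f x₁ u) x (EuclideanSpace.single i 1)

/-- Partial derivative in the second (`u`) variable. -/
def pd2 {m : ℕ} (i : Fin m) (f : Evec m → Evec m → ℝ) : Evec m → Evec m → ℝ :=
  fun x u => fderiv ℝ (fun u₁ => f x u₁) u (EuclideanSpace.single i 1)

/-- The bosonic Laplacian `𝒟_k`. -/
def Dk (m k : ℕ) (f : Evec m → Evec m → ℝ) : Evec m → Evec m → ℝ := fun x u =>
  (∑ i : Fin m, pd1 i (pd1 i f) x u)
    - (4 / ((m : ℝ) + 2 * k - 2)) *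
        ∑ i : Fin m, ∑ j : Fin m, u i * pd1 i (pd2 j (pd1 j f)) x u
    + (4 * ‖u‖ ^ 2 / (((m : ℝ) + 2 * k - 2) * ((m : ℝ) + 2 * k - 4))) *
        ∑ i : Fin m, ∑ j : Fin m, pd2 i (pd1 i (pd2 j (pd1 j f))) x u

/-- `f ∈ C²(Ω×𝔹^m, ℋ_k)`: twice continuously differentiable on `Ω × 𝔹^m` and, for each
fixed `x ∈ Ω`, coinciding in the second variable with an element of `ℋ_k`. -/
def C2Hk (m k : ℕ) (Ω : Set (Evec m)) (f : Evec m → Evec m → ℝ) : Prop :=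
  ContDiffOn ℝ 2 (fun q : Evec m × Evec m => f q.1 q.2) (Ω ×ˢ ball (0 : Evec m) 1) ∧
  ∀ x ∈ Ω, ∃ q, IsHk m k q ∧ ∀ u ∈ closedBall (0 : Evec m) 1, f x u = q u

/-- The `L^p` norm `(∫_{ℝ^{m-1}} ∫_{𝕊^{m-1}} |f(x',u)|^p dS(u) dx')^{1/p}` (`m = d+1`),
valued in `ℝ≥0∞`. -/
def lpH (d : ℕ) (p : ℝ) (f : Evec d → Evec (d + 1) → ℝ) : ENNReal :=
  (∫⁻ x' : Evec d, ∫⁻ u, ENNReal.ofReal (|f x' u| ^ p) ∂(sphereM (d + 1))) ^ (1 / p)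

/-- `f ∈ L^p(ℝ^{m-1}×𝔹^m, ℋ_k)` (`m = d+1`). -/
def MemLpH (d k : ℕ) (p : ℝ) (f : Evec d → Evec (d + 1) → ℝ) : Prop :=
  Measurable (fun q : Evec d × Evec (d + 1) => f q.1 q.2) ∧
  (∀ x' : Evec d, ∃ q, IsHk (d + 1) k q ∧
    ∀ u ∈ closedBall (0 : Evec (d + 1)) 1, f x' u = q u) ∧
  lpH d p f < ⊤

/-- The `L^p` norm `(∫_{𝕊^{m-1}} ∫_{𝕊^{m-1}} |h(ζ,ω)|^p dS(ω) dS(ζ))^{1/p}`,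
valued in `ℝ≥0∞`. -/
def lpS (m : ℕ) (p : ℝ) (h : Evec m → Evec m → ℝ) : ENNReal :=
  (∫⁻ ζ, ∫⁻ ω, ENNReal.ofReal (|h ζ ω| ^ p) ∂(sphereM m) ∂(sphereM m)) ^ (1 / p)

/-- `h ∈ L^p(𝕊^{m-1}×𝔹^m, ℋ_k)`. -/
def MemLpS (m k : ℕ) (p : ℝ) (h : Evec m → Evec m → ℝ) : Prop :=
  Measurable (fun q : Evec m × Evec m => h q.1 q.2) ∧
  (∀ ζ : Evec m, ‖ζ‖ = 1 → ∃ q, IsHk m k q ∧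
    ∀ ω ∈ closedBall (0 : Evec m) 1, h ζ ω = q ω) ∧
  lpS m p h < ⊤

/-- Iterated partial derivative `D_x^α` in the first variable, for a multi-index `α ∈ ℕ^m`. -/
def Dx {m : ℕ} (α : Fin m → ℕ) (f : Evec m → Evec m → ℝ) : Evec m → Evec m → ℝ :=
  (List.finRange m).foldr (fun i g => (pd1 i)^[α i] g) f

/-- Iterated partial derivative `D_ν^β` in the second variable, for a multi-index `β ∈ ℕ^m`. -/
def Dv {m : ℕ} (β : Fin m → ℕ) (f : Evec m → Evec m → ℝ) : Evec m → Evec m → ℝ :=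
  (List.finRange m).foldr (fun i g => (pd2 i)^[β i] g) f

/-!
The substitution `t' = x' - y s`, together with the reproducing property on the sphere, writes
`P_H[f](x, v)` as `c_{m,k} ∫ (1 + |s|²)^{-m/2} f(x' - y s, R_{(s,1)} v) ds`, which by dominated
convergence is continuous in `(x', y, v)` up to `y = 0`. It remains to see that its value at
`(a, 0)` is `f(a, v)`. For `p ∈ ℋ_k` the central projection of the hyperplane `y = 1` turns the
integral into half of `∫ p(R_u v) dS(u)`, and
`(m + 2k - 2) ∫ p(R_u v) dS(u) = (m - 2) ω_m p(v)`: on the sphere `R_u v = v - 2⟨u, v⟩u`, so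
Taylor's formula expands `p(R_u v)` into terms `⟨u, v⟩^j (∂_v^{k-j} p)(u)`. Gaussian integration by
parts evaluates the integral of each as a multiple of `p(v)`, and the multiples form a terminating
hypergeometric series that can be summed.
-/

section SphereMeasure

variable {m : ℕ}

lemma measurableEmbedding_coe_sphere :
    MeasurableEmbedding (Subtype.val : sphere (0 : Evec m) 1 → Evec m) :=
  .subtype_coe isClosed_sphere.measurableSet

lemma integral_sphereM (g : Evec m → ℝ) :
    ∫ u, g u ∂(sphereM m) =
      ∫ u : sphere (0 : Evec m) 1, g u ∂(volume : Measure (Evec m)).toSphere :=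
  measurableEmbedding_coe_sphere.integral_map g

lemma ae_sphereM_norm_eq_one : ∀ᵐ u ∂(sphereM m), ‖u‖ = 1 := by
  rw [sphereM, measurableEmbedding_coe_sphere.ae_map_iff]
  exact ae_of_all _ norm_eq_of_mem_sphere

instance isFiniteMeasure_sphereM : IsFiniteMeasure (sphereM m) :=
  Measure.isFiniteMeasure_map _ _

lemma integrable_sphereM_of_continuous {g : Evec m → ℝ} (hg : Continuous g) :
    Integrable g (sphereM m) := by
  rw [sphereM, measurableEmbedding_coe_sphere.integrable_map_iff]
  exact (hg.comp continuous_subtype_val).integrable_of_hasCompactSupport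
    (HasCompactSupport.of_compactSpace _)

lemma omegaS_pos [NeZero m] : 0 < omegaS m := by
  rw [omegaS, sphereM, Measure.map_apply measurable_subtype_coe .univ, Set.preimage_univ]
  exact ENNReal.toReal_pos (Measure.measure_univ_ne_zero.2 (Measure.toSphere_ne_zero _))
    (measure_ne_top _ _)

end SphereMeasure

section PolarCoordinates

lemma integral_homogeneous_mul_radial {E : Type*} [NormedAddCommGroup E] [NormedSpace ℝ E]
    [FiniteDimensional ℝ E] [Nontrivial E] [MeasurableSpace E] [BorelSpace E]
    (μ : Measure E) [μ.IsAddHaarMeasure] {H : E → ℝ} {n : ℕ}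
    (hH : ∀ (r : ℝ) (x : E), 0 < r → H (r • x) = r ^ n * H x) (g : ℝ → ℝ) :
    ∫ x, H x * g ‖x‖ ∂μ =
      (∫ u : sphere (0 : E) 1, H u ∂μ.toSphere) *
        ∫ r in Set.Ioi (0 : ℝ), r ^ (Module.finrank ℝ E - 1 + n) * g r := by
  have hpolar := μ.measurePreserving_homeomorphUnitSphereProd
  calc ∫ x, H x * g ‖x‖ ∂μ
      = ∫ x : ({0}ᶜ : Set E), H x.1 * g ‖x.1‖ ∂(μ.comap (↑)) := by
        rw [integral_subtype_comap (measurableSet_singleton _).compl fun x => H x * g ‖x‖,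
          restrict_compl_singleton]
    _ = ∫ z : sphere (0 : E) 1 × Set.Ioi (0 : ℝ), H z.1 * ((z.2 : ℝ) ^ n * g z.2)
          ∂(μ.toSphere.prod (.volumeIoiPow (Module.finrank ℝ E - 1))) := by
        rw [← hpolar.integral_comp (Homeomorph.measurableEmbedding _)]
        refine integral_congr_ae (ae_of_all _ fun x => ?_)
        have hx : 0 < ‖x.1‖ := norm_pos_iff.2 x.2
        have hHx := hH ‖x.1‖ (‖x.1‖⁻¹ • x.1) hx
        rw [smul_inv_smul₀ hx.ne'] at hHx
        simp only [homeomorphUnitSphereProd_apply_snd_coe, homeomorphUnitSphereProd_apply_fst_coe]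
        rw [hHx]
        ring
    _ = (∫ u : sphere (0 : E) 1, H u ∂μ.toSphere) *
          ∫ r : Set.Ioi (0 : ℝ), (r : ℝ) ^ n * g r ∂(.volumeIoiPow (Module.finrank ℝ E - 1)) :=
        integral_prod_mul (fun u : sphere (0 : E) 1 => H u)
          (fun r : Set.Ioi (0 : ℝ) => (r : ℝ) ^ n * g r)
    _ = _ := by
        congr 1
        rw [Measure.volumeIoiPow,
          integral_withDensity_eq_integral_toReal_smul (by fun_prop) (by simp),
          ← integral_subtype_comap measurableSet_Ioi
            (fun r : ℝ => r ^ (Module.finrank ℝ E - 1 + n) * g r)]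
        refine integral_congr_ae (ae_of_all _ fun r => ?_)
        have hr : (0 : ℝ) < r := r.2
        simp only [smul_eq_mul]
        rw [ENNReal.toReal_ofReal (by positivity), pow_add, mul_assoc]

lemma integral_Ioi_pow_mul_exp_neg_mul_sq (n : ℕ) {b : ℝ} (hb : 0 < b) :
    ∫ r in Set.Ioi (0 : ℝ), r ^ n * Real.exp (-b * r ^ 2) =
      b ^ (-((n : ℝ) + 1) / 2) * Real.Gamma (((n : ℝ) + 1) / 2) / 2 := by
  have h := integral_rpow_mul_exp_neg_mul_rpow (p := 2) (q := n) two_pos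
    (neg_one_lt_zero.trans_le n.cast_nonneg) hb
  simp only [Real.rpow_natCast, Real.rpow_two] at h
  rw [h]
  ring

lemma integral_abs_pow_mul_exp_neg_mul_sq (n : ℕ) {b : ℝ} (hb : 0 < b) :
    ∫ y : ℝ, |y| ^ n * Real.exp (-b * y ^ 2) =
      b ^ (-((n : ℝ) + 1) / 2) * Real.Gamma (((n : ℝ) + 1) / 2) := by
  have h := integral_comp_abs (f := fun y : ℝ => y ^ n * Real.exp (-b * y ^ 2))
  simp only [sq_abs] at h
  rw [h, integral_Ioi_pow_mul_exp_neg_mul_sq n hb]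
  ring

lemma integral_homogeneous_mul_gaussian {m : ℕ} [NeZero m] {H : Evec m → ℝ} {n : ℕ}
    (hH : ∀ (r : ℝ) (x : Evec m), 0 < r → H (r • x) = r ^ n * H x) :
    2 * ∫ x, H x * Real.exp (-‖x‖ ^ 2) =
      Real.Gamma (((m : ℝ) + n) / 2) * ∫ u, H u ∂(sphereM m) := by
  have hdim : ((m - 1 + n : ℕ) : ℝ) + 1 = m + n := by
    have := NeZero.one_le (n := m)
    push_cast [this]
    ring
  have hradial := integral_Ioi_pow_mul_exp_neg_mul_sq (m - 1 + n) one_pos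
  simp only [neg_one_mul] at hradial
  rw [integral_homogeneous_mul_radial volume hH fun r => Real.exp (-r ^ 2),
    finrank_euclideanSpace_fin, hradial, hdim, Real.one_rpow, integral_sphereM]
  ring

end PolarCoordinates

open MvPolynomial

section PolynomialCalculus

variable {σ R : Type*} [CommRing R]

lemma pderiv_pderiv_comm (i j : σ) (P : MvPolynomial σ R) :
    pderiv i (pderiv j P) = pderiv j (pderiv i P) := by
  classical
  let D (l : σ) : Derivation R (MvPolynomial σ R) (MvPolynomial σ R) := pderiv l
  have h : ⁅D i, D j⁆ = 0 := derivation_ext fun l => by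
    simp [D, Derivation.commutator_apply, pderiv_X, Pi.single_apply, apply_ite]
  simpa [D, Derivation.commutator_apply, sub_eq_zero] using DFunLike.congr_fun h P

lemma eval_smul_of_isHomogeneous {P : MvPolynomial σ R} {n : ℕ} (hP : P.IsHomogeneous n)
    (r : R) (x : σ → R) : eval (r • x) P = r ^ n * eval x P := by
  simp only [eval_eq, Pi.smul_apply, smul_eq_mul, mul_pow, Finset.prod_mul_distrib,
    Finset.mul_sum, Finset.prod_pow_eq_pow_sum]
  refine Finset.sum_congr rfl fun e he => ?_
  rw [← hP.degree_eq_sum_deg_support he]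
  ring

lemma isHomogeneous_of_eval_smul [IsDomain R] [Infinite R] {P : MvPolynomial σ R} {n : ℕ}
    (h : ∀ (r : R) (x : σ → R), eval (r • x) P = r ^ n * eval x P) : P.IsHomogeneous n := by
  suffices hcomp : homogeneousComponent n P = P from
    hcomp ▸ homogeneousComponent_isHomogeneous n P
  refine MvPolynomial.funext fun x => ?_
  have hpoly : ∑ j ∈ Finset.range (P.totalDegree + 1),
      Polynomial.C (eval x (homogeneousComponent j P)) * Polynomial.X ^ j =
        Polynomial.C (eval x P) * Polynomial.X ^ n := by
    refine Polynomial.funext fun r => ?_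
    have hr := h r x
    rw [← sum_homogeneousComponent P, map_sum] at hr
    simp only [eval_smul_of_isHomogeneous (homogeneousComponent_isHomogeneous _ P)] at hr
    rw [sum_homogeneousComponent] at hr
    simpa [Polynomial.eval_finsetSum, mul_comm (r ^ _)] using hr
  have hcoeff := congrArg (Polynomial.coeff · n) hpoly
  simp only [Polynomial.finsetSum_coeff, Polynomial.coeff_C_mul, Polynomial.coeff_X_pow,
    mul_ite, mul_one, mul_zero, Finset.sum_ite_eq, if_true] at hcoeff
  rw [← hcoeff]
  split_ifs with hn
  · rfl
  · rw [homogeneousComponent_eq_zero _ _ (by simpa using hn), map_zero]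

/-- The restriction of a polynomial to the line `t ↦ x + t v`, as a polynomial in `t`. -/
def lineRestriction (x v : σ → R) : MvPolynomial σ R →ₐ[R] Polynomial R :=
  aeval fun i => Polynomial.C (x i) + Polynomial.C (v i) * Polynomial.X

lemma eval_lineRestriction (x v : σ → R) (t : R) (P : MvPolynomial σ R) :
    (lineRestriction x v P).eval t = eval (x + t • v) P := by
  have h := comp_aeval_apply (fun i => Polynomial.C (x i) + Polynomial.C (v i) * Polynomial.X)
    (Polynomial.aeval t) P
  rw [lineRestriction, ← Polynomial.coe_aeval_eq_eval, h, aeval_eq_eval]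
  congr 2
  ext i
  simp [mul_comm (v i)]

lemma natDegree_lineRestriction_le (x v : σ → R) (P : MvPolynomial σ R) :
    (lineRestriction x v P).natDegree ≤ P.totalDegree := by
  have h := aeval_natDegree_le P le_rfl
    (fun i => Polynomial.C (x i) + Polynomial.C (v i) * Polynomial.X) (n := 1)
    fun i => by compute_degree
  rwa [mul_one] at h

variable [Fintype σ]

/-- The formal derivative `D_v = ∑ᵢ vᵢ ∂ᵢ` of polynomials in the direction `v`. -/
def dirDeriv (v : σ → R) : Derivation R (MvPolynomial σ R) (MvPolynomial σ R) :=
  ∑ i, v i • pderiv i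

lemma dirDeriv_apply (v : σ → R) (P : MvPolynomial σ R) :
    dirDeriv v P = ∑ i, C (v i) * pderiv i P := by
  have h := congrFun (map_sum Derivation.coeFnAddMonoidHom
    (fun i => v i • (pderiv i : Derivation R (MvPolynomial σ R) _)) Finset.univ) P
  exact h.trans (by simp [smul_eq_C_mul])

lemma isHomogeneous_dirDeriv (v : σ → R) {P : MvPolynomial σ R} {n : ℕ}
    (hP : P.IsHomogeneous n) : (dirDeriv v P).IsHomogeneous (n - 1) := by
  rw [dirDeriv_apply]
  exact IsHomogeneous.sum _ _ _ fun i _ => hP.pderiv.C_mul (v i)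

lemma isHomogeneous_iterate_dirDeriv (v : σ → R) {P : MvPolynomial σ R} {n : ℕ}
    (hP : P.IsHomogeneous n) (i : ℕ) : ((dirDeriv v)^[i] P).IsHomogeneous (n - i) := by
  induction i with
  | zero => exact hP
  | succ i ih =>
    rw [Function.iterate_succ_apply', Nat.sub_succ']
    exact isHomogeneous_dirDeriv v ih

lemma eval_dirDeriv_self (v : σ → R) {P : MvPolynomial σ R} {n : ℕ} (hP : P.IsHomogeneous n) :
    eval v (dirDeriv v P) = n * eval v P := by
  simpa [dirDeriv_apply] using congrArg (eval v) hP.sum_X_mul_pderiv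

lemma eval_iterate_dirDeriv_self (v : σ → R) {P : MvPolynomial σ R} {n : ℕ}
    (hP : P.IsHomogeneous n) (i : ℕ) :
    eval v ((dirDeriv v)^[i] P) = n.descFactorial i * eval v P := by
  induction i with
  | zero => simp
  | succ i ih =>
    rw [Function.iterate_succ_apply', eval_dirDeriv_self v (isHomogeneous_iterate_dirDeriv v hP i),
      ih, Nat.descFactorial_succ]
    push_cast
    ring

lemma derivative_lineRestriction (x v : σ → R) (P : MvPolynomial σ R) :
    (lineRestriction x v P).derivative = lineRestriction x v (dirDeriv v P) := by
  classical
  induction P using MvPolynomial.induction_on with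
  | C a => simp [lineRestriction]
  | add p q hp hq => simp only [map_add, hp, hq]
  | mul_X p j hp =>
    have hX : (lineRestriction x v (X j)).derivative = lineRestriction x v (dirDeriv v (X j)) := by
      simp [lineRestriction, dirDeriv_apply, pderiv_X, Pi.single_apply]
    simp only [map_mul, Derivation.leibniz, map_add, smul_eq_mul, Polynomial.derivative_mul, hp, hX]
    ring

lemma iterate_derivative_lineRestriction (x v : σ → R) (P : MvPolynomial σ R) (i : ℕ) :
    Polynomial.derivative^[i] (lineRestriction x v P) =
      lineRestriction x v ((dirDeriv v)^[i] P) :=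
  (Function.Semiconj.iterate_right (fun Q => (derivative_lineRestriction x v Q).symm) i P).symm

/-- The formal Laplacian `∑ᵢ ∂ᵢ²` of polynomials. -/
def polyLaplacian : MvPolynomial σ R →ₗ[R] MvPolynomial σ R :=
  ∑ i, (pderiv i).toLinearMap ∘ₗ (pderiv i).toLinearMap

lemma polyLaplacian_apply (P : MvPolynomial σ R) :
    polyLaplacian P = ∑ i, pderiv i (pderiv i P) := by
  simp [polyLaplacian]

lemma polyLaplacian_dirDeriv (v : σ → R) (P : MvPolynomial σ R) :
    polyLaplacian (dirDeriv v P) = dirDeriv v (polyLaplacian P) := by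
  simp only [polyLaplacian_apply, dirDeriv_apply, map_sum, pderiv_C_mul]
  rw [Finset.sum_comm]
  refine Finset.sum_congr rfl fun j _ => Finset.sum_congr rfl fun i _ => ?_
  rw [pderiv_pderiv_comm i j, pderiv_pderiv_comm i j]

lemma polyLaplacian_iterate_dirDeriv {P : MvPolynomial σ R} (hP : polyLaplacian P = 0)
    (v : σ → R) (i : ℕ) : polyLaplacian ((dirDeriv v)^[i] P) = 0 := by
  induction i with
  | zero => exact hP
  | succ i ih => rw [Function.iterate_succ_apply', polyLaplacian_dirDeriv, ih, map_zero]

/-- The linear form `x ↦ ⟨v, x⟩`, as a polynomial. -/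
def linearForm (v : σ → R) : MvPolynomial σ R :=
  ∑ i, C (v i) * X i

lemma isHomogeneous_linearForm (v : σ → R) :
    (linearForm v).IsHomogeneous 1 :=
  IsHomogeneous.sum _ _ _ fun i _ => isHomogeneous_C_mul_X (v i) i

lemma pderiv_linearForm (v : σ → R) (a : σ) :
    pderiv a (linearForm v) = C (v a) := by
  classical
  simp [linearForm, pderiv_X, Pi.single_apply]

lemma sum_pderiv_linearForm_pow_mul (v : σ → R) (j : ℕ)
    {P : MvPolynomial σ R} (hP : polyLaplacian P = 0) :
    ∑ a, pderiv a (linearForm v ^ (j + 1) * pderiv a P) =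
      ((j + 1 : ℕ) : MvPolynomial σ R) * (linearForm v ^ j * dirDeriv v P) := by
  have hterm (a : σ) : pderiv a (linearForm v ^ (j + 1) * pderiv a P) =
      ((j + 1 : ℕ) : MvPolynomial σ R) * linearForm v ^ j * (C (v a) * pderiv a P) +
        linearForm v ^ (j + 1) * pderiv a (pderiv a P) := by
    rw [pderiv_mul, pderiv_pow, pderiv_linearForm, Nat.add_sub_cancel]
    ring
  simp only [hterm, Finset.sum_add_distrib, ← Finset.mul_sum]
  rw [← polyLaplacian_apply, ← dirDeriv_apply, hP, mul_zero, add_zero, mul_assoc]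

end PolynomialCalculus

section Taylor

variable {σ K : Type*} [Fintype σ] [Field K] [CharZero K]

lemma coeff_lineRestriction (x v : σ → K) (P : MvPolynomial σ K) (i : ℕ) :
    (lineRestriction x v P).coeff i = eval x ((dirDeriv v)^[i] P) / i.factorial := by
  have h := Polynomial.coeff_iterate_derivative (k := i) (lineRestriction x v P) 0
  rw [iterate_derivative_lineRestriction, Polynomial.coeff_zero_eq_eval_zero,
    eval_lineRestriction, zero_smul, add_zero, zero_add, Nat.descFactorial_self,
    nsmul_eq_mul] at h
  rw [h, mul_div_cancel_left₀ _ (Nat.cast_ne_zero.2 i.factorial_ne_zero)]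

lemma eval_add_eq_sum_iterate_dirDeriv {P : MvPolynomial σ K} {n : ℕ} (hP : P.totalDegree ≤ n)
    (x v : σ → K) :
    eval (x + v) P = ∑ i ∈ Finset.range (n + 1), eval x ((dirDeriv v)^[i] P) / i.factorial := by
  have hdeg : (lineRestriction x v P).natDegree < n + 1 :=
    Nat.lt_succ_of_le ((natDegree_lineRestriction_le x v P).trans hP)
  have h := Polynomial.eval_eq_sum_range' hdeg 1
  simpa only [eval_lineRestriction, one_smul, one_pow, mul_one, coeff_lineRestriction] using h

lemma eval_smul_add_of_isHomogeneous {P : MvPolynomial σ K} {n : ℕ} (hP : P.IsHomogeneous n)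
    (s : K) (u v : σ → K) :
    eval (s • u + v) P = ∑ j ∈ Finset.range (n + 1),
      s ^ j * eval u ((dirDeriv v)^[n - j] P) / (n - j).factorial := by
  rw [eval_add_eq_sum_iterate_dirDeriv hP.totalDegree_le, ← Finset.sum_flip]
  refine Finset.sum_congr rfl fun j hj => ?_
  rw [eval_smul_of_isHomogeneous (isHomogeneous_iterate_dirDeriv v hP (n - j)),
    Nat.sub_sub_self (Finset.mem_range_succ_iff.1 hj)]

end Taylor

section PolynomialFunctions

variable {m : ℕ}

lemma continuous_eval_ofLp (P : MvPolynomial (Fin m) ℝ) :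
    Continuous fun x : Evec m => eval x.ofLp P :=
  P.continuous_eval.comp (PiLp.continuous_ofLp 2 _)

lemma hasFDerivAt_eval_ofLp (P : MvPolynomial (Fin m) ℝ) (x : Evec m) :
    HasFDerivAt (fun y : Evec m => eval y.ofLp P)
      (∑ i, eval x.ofLp (pderiv i P) • (EuclideanSpace.proj i : Evec m →L[ℝ] ℝ)) x := by
  induction P using MvPolynomial.induction_on with
  | C a => simpa using hasFDerivAt_const a x
  | add p q hp hq =>
    simp only [map_add]
    refine (hp.add hq).congr_fderiv ?_
    simp [add_smul, Finset.sum_add_distrib]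
  | mul_X p j hp =>
    have hX : HasFDerivAt (fun y : Evec m => y j) (EuclideanSpace.proj j : Evec m →L[ℝ] ℝ) x :=
      (EuclideanSpace.proj j : Evec m →L[ℝ] ℝ).hasFDerivAt
    simp only [map_mul, eval_X]
    refine (hp.mul hX).congr_fderiv ?_
    ext y
    simp [pderiv_X, Pi.single_apply, add_mul, Finset.sum_add_distrib, Finset.mul_sum, mul_assoc,
      apply_ite]

lemma pdv_eval_ofLp (i : Fin m) (P : MvPolynomial (Fin m) ℝ) :
    pdv i (fun x : Evec m => eval x.ofLp P) = fun x => eval x.ofLp (pderiv i P) := by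
  ext x
  rw [pdv, (hasFDerivAt_eval_ofLp P x).fderiv]
  simp

lemma lapl_eval_ofLp (P : MvPolynomial (Fin m) ℝ) (x : Evec m) :
    lapl (fun y : Evec m => eval y.ofLp P) x = eval x.ofLp (polyLaplacian P) := by
  simp only [lapl, pdv_eval_ofLp, polyLaplacian_apply, map_sum]

lemma IsHk.exists_polynomial {k : ℕ} {p : Evec m → ℝ} (hp : IsHk m k p) :
    ∃ P : MvPolynomial (Fin m) ℝ, P.IsHomogeneous k ∧ polyLaplacian P = 0 ∧
      p = fun x : Evec m => eval x.ofLp P := by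
  obtain ⟨⟨P, hP⟩, hhom, hlapl⟩ := hp
  obtain rfl : p = fun x : Evec m => eval x.ofLp P := funext hP
  exact ⟨P, isHomogeneous_of_eval_smul fun r x => hhom r (WithLp.toLp 2 x),
    MvPolynomial.funext fun x => by
      simpa [lapl_eval_ofLp] using hlapl (WithLp.toLp 2 x), rfl⟩

lemma IsHk.continuous {k : ℕ} {p : Evec m → ℝ} (hp : IsHk m k p) : Continuous p := by
  obtain ⟨P, -, -, rfl⟩ := hp.exists_polynomial
  exact continuous_eval_ofLp P

lemma eval_linearForm (u v : Evec m) : eval u.ofLp (linearForm v.ofLp) = ⟪u, v⟫ := by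
  simp [linearForm, PiLp.inner_apply]

end PolynomialFunctions

section GaussianIntegrals

lemma integrable_norm_pow_mul_gaussian {E : Type*} [NormedAddCommGroup E] [NormedSpace ℝ E]
    [FiniteDimensional ℝ E] [Nontrivial E] [MeasurableSpace E] [BorelSpace E]
    (μ : Measure E) [μ.IsAddHaarMeasure] (n : ℕ) :
    Integrable (fun x : E => ‖x‖ ^ n * Real.exp (-‖x‖ ^ 2)) μ := by
  rw [integrable_fun_norm_addHaar (μ := μ) (f := fun r => r ^ n * Real.exp (-r ^ 2))]
  have h := integrableOn_rpow_mul_exp_neg_mul_sq one_pos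
    (s := ((Module.finrank ℝ E - 1 + n : ℕ) : ℝ)) (neg_one_lt_zero.trans_le (Nat.cast_nonneg _))
  refine h.congr_fun (fun r _ => ?_) measurableSet_Ioi
  simp only [Real.rpow_natCast, smul_eq_mul, pow_add, neg_one_mul, mul_assoc]

variable {m : ℕ}

lemma abs_eval_monomial_le (e : Fin m →₀ ℕ) (a : ℝ) (x : Evec m) :
    |eval x.ofLp (monomial e a)| ≤ |a| * ‖x‖ ^ e.degree := by
  rw [eval_monomial, abs_mul, Finsupp.prod, Finset.abs_prod, Finsupp.degree_apply,
    ← Finset.prod_pow_eq_pow_sum]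
  gcongr with i
  rw [abs_pow]
  gcongr
  exact PiLp.norm_apply_le x i

lemma integrable_eval_mul_gaussian [NeZero m] (P : MvPolynomial (Fin m) ℝ) :
    Integrable fun x : Evec m => eval x.ofLp P * Real.exp (-‖x‖ ^ 2) := by
  induction P using MvPolynomial.induction_on' with
  | add p q hp hq =>
    simp only [map_add, add_mul]
    exact hp.add hq
  | monomial e a =>
    refine ((integrable_norm_pow_mul_gaussian volume e.degree).const_mul |a|).mono'
      ((continuous_eval_ofLp _).mul (by fun_prop)).aestronglyMeasurable (ae_of_all _ fun x => ?_)
    rw [norm_mul, Real.norm_eq_abs, Real.norm_eq_abs, Real.abs_exp, ← mul_assoc]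
    gcongr
    exact abs_eval_monomial_le e a x

lemma hasFDerivAt_gaussian {E : Type*} [NormedAddCommGroup E] [InnerProductSpace ℝ E] (x : E) :
    HasFDerivAt (fun y : E => Real.exp (-‖y‖ ^ 2))
      ((-2 * Real.exp (-‖x‖ ^ 2)) • innerSL ℝ x) x := by
  refine (hasStrictFDerivAt_norm_sq x).hasFDerivAt.neg.exp.congr_fderiv ?_
  ext y
  simp only [Pi.neg_apply, smul_neg, neg_apply, smul_apply, nsmul_eq_mul, Nat.cast_ofNat,
    smul_eq_mul, neg_mul, neg_smul, neg_inj]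
  ring

lemma integral_X_mul_gaussian [NeZero m] (P : MvPolynomial (Fin m) ℝ) (a : Fin m) :
    2 * ∫ x : Evec m, eval x.ofLp (X a * P) * Real.exp (-‖x‖ ^ 2) =
      ∫ x : Evec m, eval x.ofLp (pderiv a P) * Real.exp (-‖x‖ ^ 2) := by
  have hP (x : Evec m) : fderiv ℝ (fun y : Evec m => eval y.ofLp P) x
      (EuclideanSpace.single a 1) = eval x.ofLp (pderiv a P) :=
    congrFun (pdv_eval_ofLp a P) x
  have hexp (x : Evec m) : eval x.ofLp P * fderiv ℝ (fun y : Evec m => Real.exp (-‖y‖ ^ 2)) x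
      (EuclideanSpace.single a 1) = -2 * (eval x.ofLp (X a * P) * Real.exp (-‖x‖ ^ 2)) := by
    rw [(hasFDerivAt_gaussian x).fderiv]
    simp only [neg_mul, neg_smul, neg_apply, smul_apply, coe_innerSL_apply,
      EuclideanSpace.inner_single_right, Real.ringHom_apply, one_mul, smul_eq_mul, map_mul, eval_X]
    ring
  have hparts := integral_mul_fderiv_eq_neg_fderiv_mul_of_integrable
    (μ := (volume : Measure (Evec m))) (f := fun x : Evec m => eval x.ofLp P)
    (g := fun x : Evec m => Real.exp (-‖x‖ ^ 2)) (v := EuclideanSpace.single a 1)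
    (by simpa only [hP] using integrable_eval_mul_gaussian _)
    (by simpa only [hexp] using (integrable_eval_mul_gaussian _).const_mul _)
    (integrable_eval_mul_gaussian _)
    (fun x _ => (hasFDerivAt_eval_ofLp P x).differentiableAt)
    (fun x _ => (hasFDerivAt_gaussian x).differentiableAt)
  simp only [hP, hexp, integral_const_mul] at hparts
  linarith

end GaussianIntegrals

section SphereIntegral

variable {m : ℕ}

/-- Integration of polynomials over the unit sphere, as a linear form. -/
def sphereIntegral (m : ℕ) : MvPolynomial (Fin m) ℝ →ₗ[ℝ] ℝ where
  toFun P := ∫ u : Evec m, eval u.ofLp P ∂(sphereM m)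
  map_add' P Q := by
    simp only [map_add]
    exact integral_add (integrable_sphereM_of_continuous (continuous_eval_ofLp P))
      (integrable_sphereM_of_continuous (continuous_eval_ofLp Q))
  map_smul' c P := by simp [smul_eval, integral_const_mul]

lemma sphereIntegral_apply (P : MvPolynomial (Fin m) ℝ) :
    sphereIntegral m P = ∫ u : Evec m, eval u.ofLp P ∂(sphereM m) :=
  rfl

lemma sphereIntegral_C (c : ℝ) : sphereIntegral m (C c) = omegaS m * c := by
  simp [sphereIntegral_apply, omegaS, Measure.real]

lemma integral_eval_mul_gaussian [NeZero m] {P : MvPolynomial (Fin m) ℝ} {n : ℕ}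
    (hP : P.IsHomogeneous n) :
    2 * ∫ x : Evec m, eval x.ofLp P * Real.exp (-‖x‖ ^ 2) =
      Real.Gamma (((m : ℝ) + n) / 2) * sphereIntegral m P :=
  integral_homogeneous_mul_gaussian fun r x _ => eval_smul_of_isHomogeneous hP r x.ofLp

lemma sphereIntegral_X_mul [NeZero m] {P : MvPolynomial (Fin m) ℝ} {n : ℕ}
    (hP : P.IsHomogeneous (n + 1)) (a : Fin m) :
    ((m : ℝ) + n) * sphereIntegral m (X a * P) = sphereIntegral m (pderiv a P) := by
  have hpos : 0 < ((m : ℝ) + n) / 2 := by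
    have : 0 < (m : ℝ) := Nat.cast_pos.2 (NeZero.pos m)
    positivity
  have hXP := integral_eval_mul_gaussian ((isHomogeneous_X ℝ a).mul hP)
  have hdP := integral_eval_mul_gaussian (hP.pderiv (i := a))
  have hΓ : Real.Gamma (((m : ℝ) + (1 + (n + 1) : ℕ)) / 2) =
      ((m : ℝ) + n) / 2 * Real.Gamma (((m : ℝ) + n) / 2) := by
    rw [← Real.Gamma_add_one hpos.ne']
    congr 1
    push_cast
    ring
  rw [hΓ] at hXP
  rw [← integral_X_mul_gaussian, Nat.add_sub_cancel] at hdP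
  refine mul_left_cancel₀ (Real.Gamma_pos_of_pos hpos).ne' ?_
  linear_combination hdP - 2 * hXP

lemma sphereIntegral_linearForm_pow_succ_mul [NeZero m] {P : MvPolynomial (Fin m) ℝ} {j : ℕ}
    (hP : P.IsHomogeneous (j + 1)) (hPΔ : polyLaplacian P = 0) (v : Fin m → ℝ) :
    ((m : ℝ) + 2 * j) * sphereIntegral m (linearForm v ^ (j + 1) * P) =
      sphereIntegral m (linearForm v ^ j * dirDeriv v P) := by
  set c : ℝ := ((j + 1 : ℕ) : ℝ)
  have heuler : ∑ a, X a * (linearForm v ^ (j + 1) * pderiv a P) =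
      c • (linearForm v ^ (j + 1) * P) := by
    rw [← mul_smul_comm, Nat.cast_smul_eq_nsmul, ← hP.sum_X_mul_pderiv, Finset.mul_sum]
    exact Finset.sum_congr rfl fun a _ => mul_left_comm _ _ _
  have hdiv : ∑ a, pderiv a (linearForm v ^ (j + 1) * pderiv a P) =
      c • (linearForm v ^ j * dirDeriv v P) := by
    rw [sum_pderiv_linearForm_pow_mul v j hPΔ, Nat.cast_smul_eq_nsmul, nsmul_eq_mul]
  have hparts (a : Fin m) :
      ((m : ℝ) + 2 * j) * sphereIntegral m (X a * (linearForm v ^ (j + 1) * pderiv a P)) =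
        sphereIntegral m (pderiv a (linearForm v ^ (j + 1) * pderiv a P)) := by
    have hhom : (linearForm v ^ (j + 1) * pderiv a P).IsHomogeneous (2 * j + 1) := by
      convert ((isHomogeneous_linearForm v).pow (j + 1)).mul (hP.pderiv (i := a)) using 1
      rw [one_mul, Nat.add_sub_cancel]
      ring
    simpa using sphereIntegral_X_mul hhom a
  have hsum := Finset.sum_congr rfl fun a (_ : a ∈ Finset.univ) => hparts a
  rw [← Finset.mul_sum, ← map_sum, ← map_sum, heuler, hdiv, map_smul, map_smul, smul_eq_mul,
    smul_eq_mul, mul_left_comm] at hsum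
  exact mul_left_cancel₀ (Nat.cast_ne_zero.2 j.succ_ne_zero) hsum

lemma sphereIntegral_linearForm_pow_mul [NeZero m] {P : MvPolynomial (Fin m) ℝ} {j : ℕ}
    (hP : P.IsHomogeneous j) (hPΔ : polyLaplacian P = 0) (v : Fin m → ℝ) :
    (∏ i ∈ Finset.range j, ((m : ℝ) + 2 * i)) * sphereIntegral m (linearForm v ^ j * P) =
      j.factorial * (omegaS m * eval v P) := by
  induction j generalizing P with
  | zero =>
    obtain ⟨c, rfl⟩ : ∃ c, P = C c :=
      ⟨_, totalDegree_eq_zero_iff_eq_C.1 (Nat.le_zero.1 hP.totalDegree_le)⟩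
    simp [sphereIntegral_C]
  | succ j ih =>
    have hDP := ih (isHomogeneous_dirDeriv v hP) (by rw [polyLaplacian_dirDeriv, hPΔ, map_zero])
    rw [Finset.prod_range_succ, mul_assoc, sphereIntegral_linearForm_pow_succ_mul hP hPΔ, hDP,
      eval_dirDeriv_self v hP, Nat.factorial_succ]
    push_cast
    ring

end SphereIntegral

section ReflectionAverage

-- The value at `1` of the hypergeometric series `₂F₁(-k, 1; μ/2; ·)`.
lemma mul_sum_descFactorial_div_prod (k : ℕ) {μ : ℝ} (hμ : 0 < μ) :
    (μ + 2 * k - 2) * ∑ j ∈ Finset.range (k + 1),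
      (-2) ^ j * k.descFactorial j / ∏ i ∈ Finset.range j, (μ + 2 * i) = μ - 2 := by
  induction k generalizing μ with
  | zero => simp
  | succ k ih =>
    have hshift (j : ℕ) : (-2) ^ (j + 1) * ((k + 1).descFactorial (j + 1) : ℝ) /
        ∏ i ∈ Finset.range (j + 1), (μ + 2 * i) = -2 * (k + 1) / μ *
          ((-2) ^ j * k.descFactorial j / ∏ i ∈ Finset.range j, (μ + 2 + 2 * i)) := by
      have hprod : ∏ i ∈ Finset.range j, (μ + 2 * ((i + 1 : ℕ) : ℝ)) =
          ∏ i ∈ Finset.range j, (μ + 2 + 2 * (i : ℝ)) :=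
        Finset.prod_congr rfl fun i _ => by push_cast; ring
      rw [Finset.prod_range_succ', hprod, Nat.succ_descFactorial_succ, div_mul_div_comm]
      push_cast
      congr 1 <;> ring
    have hk := ih (μ := μ + 2) (by positivity)
    rw [Finset.sum_range_succ', Finset.sum_congr rfl fun j _ => hshift j, ← Finset.mul_sum]
    simp only [pow_zero, Nat.descFactorial_zero, Finset.range_zero, Finset.prod_empty]
    push_cast at hk ⊢
    field_simp
    linear_combination (-2 * (k + 1)) * hk

variable {m k : ℕ}

lemma reflv_eq_reflection (a u : Evec m) :
    reflv a u = (Submodule.span ℝ {a})ᗮ.reflection u := by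
  rw [Submodule.reflection_orthogonal_apply, Submodule.reflection_singleton_apply, reflv,
    neg_sub, ← Nat.cast_smul_eq_nsmul ℝ, smul_smul, RCLike.ofReal_real_eq_id, id, Nat.cast_ofNat,
    mul_div_assoc]

lemma norm_reflv (a u : Evec m) : ‖reflv a u‖ = ‖u‖ := by
  rw [reflv_eq_reflection, LinearIsometryEquiv.norm_map]

lemma reflv_smul_left {r : ℝ} (hr : r ≠ 0) (a u : Evec m) : reflv (r • a) u = reflv a u := by
  simp only [reflv_eq_reflection, Submodule.span_singleton_smul_eq hr.isUnit]

lemma reflv_of_norm_eq_one {u : Evec m} (hu : ‖u‖ = 1) (v : Evec m) :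
    reflv u v = (-2 * ⟪u, v⟫) • u + v := by
  rw [reflv, hu, one_pow, div_one, neg_mul, neg_smul, sub_eq_neg_add]

lemma IsZk.reflv_left {Z : Evec m → Evec m → ℝ} (hZ : IsZk m k Z) (a u v : Evec m) :
    Z (reflv a u) v = Z u (reflv a v) := by
  have h := hZ.2.2.2.2 (Submodule.span ℝ {a})ᗮ.reflection u (reflv a v)
  rwa [reflv_eq_reflection a v, Submodule.reflection_reflection, ← reflv_eq_reflection,
    ← reflv_eq_reflection] at h

lemma integral_IsZk_reflv_mul {Z : Evec m → Evec m → ℝ} (hZ : IsZk m k Z) {p : Evec m → ℝ}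
    (hp : IsHk m k p) (a v : Evec m) :
    ∫ u, Z (reflv a u) v * p u ∂(sphereM m) = p (reflv a v) := by
  simp only [hZ.reflv_left, hZ.2.1 p hp]

lemma sphereIntegral_reflection_term [NeZero m] {P : MvPolynomial (Fin m) ℝ}
    (hP : P.IsHomogeneous k) (hPΔ : polyLaplacian P = 0) (v : Fin m → ℝ) {j : ℕ} (hj : j ≤ k) :
    (-2) ^ j / (k - j).factorial *
        sphereIntegral m (linearForm v ^ j * (dirDeriv v)^[k - j] P) =
      (-2) ^ j * k.descFactorial j / (∏ i ∈ Finset.range j, ((m : ℝ) + 2 * i)) *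
        (omegaS m * eval v P) := by
  have hhom := isHomogeneous_iterate_dirDeriv v hP (k - j)
  rw [Nat.sub_sub_self hj] at hhom
  have hprod : ∏ i ∈ Finset.range j, ((m : ℝ) + 2 * i) ≠ 0 := by
    refine Finset.prod_ne_zero_iff.2 fun i _ => ?_
    have : 0 < (m : ℝ) := Nat.cast_pos.2 (NeZero.pos m)
    positivity
  have hcoeff : (j.factorial * k.descFactorial (k - j) : ℝ) =
      (k - j).factorial * k.descFactorial j := by
    norm_cast
    rw [Nat.descFactorial_eq_factorial_mul_choose, Nat.descFactorial_eq_factorial_mul_choose,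
      Nat.choose_symm hj]
    ring
  have h := sphereIntegral_linearForm_pow_mul hhom (polyLaplacian_iterate_dirDeriv hPΔ v _) v
  rw [eval_iterate_dirDeriv_self v hP] at h
  field_simp
  linear_combination h + omegaS m * eval v P * hcoeff

lemma integral_reflv [NeZero m] {p : Evec m → ℝ} (hp : IsHk m k p) (v : Evec m) :
    ((m : ℝ) + 2 * k - 2) * ∫ u, p (reflv u v) ∂(sphereM m) =
      ((m : ℝ) - 2) * (omegaS m * p v) := by
  obtain ⟨P, hP, hPΔ, rfl⟩ := hp.exists_polynomial
  have hexpand : ∫ u, eval (reflv u v).ofLp P ∂(sphereM m) =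
      sphereIntegral m (∑ j ∈ Finset.range (k + 1), ((-2) ^ j / (k - j).factorial : ℝ) •
        (linearForm v.ofLp ^ j * (dirDeriv v.ofLp)^[k - j] P)) := by
    refine integral_congr_ae ?_
    filter_upwards [ae_sphereM_norm_eq_one] with u hu
    rw [reflv_of_norm_eq_one hu, WithLp.ofLp_add, WithLp.ofLp_smul,
      eval_smul_add_of_isHomogeneous hP, map_sum]
    refine Finset.sum_congr rfl fun j _ => ?_
    rw [smul_eval, map_mul, map_pow, eval_linearForm]
    ring
  have hsum : ∫ u, eval (reflv u v).ofLp P ∂(sphereM m) =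
      (∑ j ∈ Finset.range (k + 1), (-2) ^ j * k.descFactorial j /
        ∏ i ∈ Finset.range j, ((m : ℝ) + 2 * i)) * (omegaS m * eval v.ofLp P) := by
    rw [hexpand, map_sum, Finset.sum_mul]
    refine Finset.sum_congr rfl fun j hj => ?_
    rw [map_smul, smul_eq_mul]
    exact sphereIntegral_reflection_term hP hPΔ v.ofLp (Finset.mem_range_succ_iff.1 hj)
  rw [hsum, ← mul_assoc, mul_sum_descFactorial_div_prod k (Nat.cast_pos.2 (NeZero.pos m))]

end ReflectionAverage

section CentralProjection

lemma measurePreserving_snd_smul_fst {E : Type*} [NormedAddCommGroup E] [NormedSpace ℝ E]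
    [FiniteDimensional ℝ E] [MeasurableSpace E] [BorelSpace E]
    (μ : Measure E) [μ.IsAddHaarMeasure] :
    MeasurePreserving (fun z : E × ℝ => (z.2 • z.1, z.2))
      (μ.prod (volume.withDensity fun y => ENNReal.ofReal (|y| ^ Module.finrank ℝ E)))
      (μ.prod volume) := by
  have hT : Measurable fun z : E × ℝ => (z.2 • z.1, z.2) := by fun_prop
  refine ⟨hT, Measure.ext fun A hA => ?_⟩
  rw [Measure.map_apply hT hA, Measure.prod_apply_symm (hT hA), Measure.prod_apply_symm hA,
    lintegral_withDensity_eq_lintegral_mul _ (by fun_prop)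
      (measurable_measure_prodMk_right (hT hA))]
  refine lintegral_congr_ae ?_
  filter_upwards [Measure.ae_ne volume (0 : ℝ)] with y hy
  have hscale := μ.addHaar_preimage_smul hy ((fun s => (s, y)) ⁻¹' A)
  have hdet : 0 < |y| ^ Module.finrank ℝ E := by positivity
  rw [abs_inv, abs_pow] at hscale
  simp only [Pi.mul_apply, Set.preimage_preimage] at hscale ⊢
  rw [hscale, ← mul_assoc, ← ENNReal.ofReal_mul hdet.le, mul_inv_cancel₀ hdet.ne',
    ENNReal.ofReal_one, one_mul]

lemma integral_prod_eq_integral_integral_smul {E F : Type*} [NormedAddCommGroup E]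
    [NormedSpace ℝ E] [FiniteDimensional ℝ E] [MeasurableSpace E] [BorelSpace E]
    [NormedAddCommGroup F] [NormedSpace ℝ F] (μ : Measure E) [μ.IsAddHaarMeasure]
    {g : E × ℝ → F} (hg : Integrable g (μ.prod volume)) :
    ∫ z, g z ∂(μ.prod volume) =
      ∫ s, (∫ y : ℝ, |y| ^ Module.finrank ℝ E • g (y • s, y)) ∂μ := by
  have hmp := measurePreserving_snd_smul_fst μ
  rw [← hmp.map_eq, integral_map hmp.aemeasurable (hmp.map_eq ▸ hg.aestronglyMeasurable),
    ← Function.comp_def g, integral_prod _ (hmp.integrable_comp_of_integrable hg)]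
  refine integral_congr_ae (ae_of_all _ fun s => ?_)
  simp only [Function.comp_apply]
  rw [integral_withDensity_eq_integral_toReal_smul (by fun_prop) (by simp)]
  refine integral_congr_ae (ae_of_all _ fun y => ?_)
  simp only
  rw [ENNReal.toReal_ofReal (by positivity)]

variable {d : ℕ}

lemma upP_sub (x y : Evec d) (s t : ℝ) : upP d x s - upP d y t = upP d (x - y) (s - t) := by
  ext i
  refine Fin.lastCases ?_ (fun j => ?_) i <;> simp [upP]

lemma upP_smul (r : ℝ) (x : Evec d) (s : ℝ) : upP d (r • x) (r * s) = r • upP d x s := by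
  ext i
  refine Fin.lastCases ?_ (fun j => ?_) i <;> simp [upP]

lemma upP_smul_self (y : ℝ) (s : Evec d) : upP d (y • s) y = y • upP d s 1 := by
  rw [← upP_smul, mul_one]

lemma norm_sq_upP (x : Evec d) (s : ℝ) : ‖upP d x s‖ ^ 2 = ‖x‖ ^ 2 + s ^ 2 := by
  simp [EuclideanSpace.norm_sq_eq, Fin.sum_univ_castSucc, upP]

lemma upP_one_ne_zero (s : Evec d) : upP d s 1 ≠ 0 := fun h => by
  have hnorm := norm_sq_upP s 1
  rw [h, norm_zero] at hnorm
  nlinarith [sq_nonneg ‖s‖]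

lemma continuous_upP : Continuous fun z : Evec d × ℝ => upP d z.1 z.2 := by
  refine (EuclideanSpace.equiv (Fin (d + 1)) ℝ).symm.continuous.comp (continuous_pi fun i => ?_)
  refine Fin.lastCases ?_ (fun j => ?_) i
  · simpa only [Fin.snoc_last] using continuous_snd
  · simp only [Fin.snoc_castSucc, PiLp.continuousLinearEquiv_apply]
    fun_prop

lemma measurePreserving_upP : MeasurePreserving fun z : Evec d × ℝ => upP d z.1 z.2 := by
  have hofLp : MeasurePreserving fun z : Evec d × ℝ => (WithLp.ofLp z.1, z.2) :=
    (PiLp.volume_preserving_ofLp (Fin d)).prod (MeasurePreserving.id _)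
  have hinsert := (volume_preserving_piFinSuccAbove (fun _ : Fin (d + 1) => ℝ) (Fin.last d)).symm
  convert (PiLp.volume_preserving_toLp (Fin (d + 1))).comp
    (hinsert.comp (Measure.measurePreserving_swap.comp hofLp)) using 1
  ext z i
  refine Fin.lastCases ?_ (fun j => ?_) i <;> simp [upP, MeasurableEquiv.piFinSuccAbove]

lemma integral_eq_integral_integral_cone {F : Type*} [NormedAddCommGroup F] [NormedSpace ℝ F]
    {g : Evec (d + 1) → F} (hg : Integrable g) :
    ∫ x, g x = ∫ s : Evec d, ∫ y : ℝ, |y| ^ d • g (y • upP d s 1) := by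
  have hmp := measurePreserving_upP (d := d)
  rw [← hmp.map_eq] at hg ⊢
  rw [integral_map hmp.aemeasurable hg.aestronglyMeasurable]
  refine (integral_prod_eq_integral_integral_smul volume
    (hg.comp_aemeasurable hmp.aemeasurable)).trans ?_
  simp only [Function.comp_apply, upP_smul_self, finrank_euclideanSpace_fin]

/-- The boundary weight `(1 + |s|²)^{-(d+1)/2}`: the Poisson kernel of the half-space at height
`1`, and the Jacobian of the central projection of the hyperplane `y = 1` to the sphere. -/
def poissonWeight (d : ℕ) (s : Evec d) : ℝ := (1 + ‖s‖ ^ 2) ^ (-((d : ℝ) + 1) / 2)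

lemma poissonWeight_nonneg (s : Evec d) : 0 ≤ poissonWeight d s := by
  unfold poissonWeight
  positivity

lemma continuous_poissonWeight : Continuous (poissonWeight d) :=
  Continuous.rpow_const (by fun_prop) fun s => Or.inl (by positivity)

lemma integrable_poissonWeight : Integrable (poissonWeight d) :=
  integrable_rpow_neg_one_add_norm_sq (by simp)

lemma poissonWeight_eq_norm_upP_pow (s : Evec d) :
    poissonWeight d s = (‖upP d s 1‖ ^ (d + 1))⁻¹ := by
  have hnorm : (1 + ‖s‖ ^ 2 : ℝ) = ‖upP d s 1‖ ^ (2 : ℝ) := by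
    rw [Real.rpow_two, norm_sq_upP, one_pow, add_comm]
  rw [poissonWeight, hnorm, ← Real.rpow_mul (norm_nonneg _), ← Real.rpow_natCast,
    ← Real.rpow_neg (norm_nonneg _)]
  congr 1
  push_cast
  ring

lemma integral_poissonWeight_mul {H : Evec (d + 1) → ℝ} (hmeas : Measurable H) {M : ℝ}
    (hbound : ∀ x, |H x| ≤ M) (hcone : ∀ (r : ℝ) (x : Evec (d + 1)), r ≠ 0 → H (r • x) = H x) :
    2 * ∫ s : Evec d, poissonWeight d s * H (upP d s 1) = ∫ u, H u ∂(sphereM (d + 1)) := by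
  have hint : Integrable fun x : Evec (d + 1) => H x * Real.exp (-‖x‖ ^ 2) := by
    have hgauss := integrable_norm_pow_mul_gaussian (volume : Measure (Evec (d + 1))) 0
    simp only [pow_zero, one_mul] at hgauss
    exact hgauss.bdd_mul hmeas.aestronglyMeasurable (ae_of_all _ hbound)
  have hinner (s : Evec d) :
      ∫ y : ℝ, |y| ^ d • (H (y • upP d s 1) * Real.exp (-‖y • upP d s 1‖ ^ 2)) =
        Real.Gamma (((d : ℝ) + 1) / 2) * (poissonWeight d s * H (upP d s 1)) := by
    have hgauss := integral_abs_pow_mul_exp_neg_mul_sq d (b := 1 + ‖s‖ ^ 2) (by positivity)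
    rw [← mul_assoc, mul_comm (Real.Gamma _), poissonWeight, ← hgauss, ← integral_mul_const]
    refine integral_congr_ae ?_
    filter_upwards [Measure.ae_ne volume (0 : ℝ)] with y hy
    rw [hcone y _ hy, norm_smul, mul_pow, norm_sq_upP, smul_eq_mul, Real.norm_eq_abs, sq_abs,
      one_pow]
    ring_nf
  have hpolar := integral_homogeneous_mul_gaussian (n := 0) (H := H) fun r x hr => by
    rw [hcone r x hr.ne', pow_zero, one_mul]
  rw [integral_eq_integral_integral_cone hint] at hpolar
  simp only [hinner, integral_const_mul, Nat.cast_add, Nat.cast_one, Nat.cast_zero,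
    add_zero] at hpolar
  have hΓ : 0 < Real.Gamma (((d : ℝ) + 1) / 2) := Real.Gamma_pos_of_pos (by positivity)
  exact mul_left_cancel₀ hΓ.ne' ((mul_left_comm _ _ _).trans hpolar)

end CentralProjection

section PoissonIntegral

variable {d k : ℕ} {Z : Evec (d + 1) → Evec (d + 1) → ℝ} {f : Evec d → Evec (d + 1) → ℝ}

/-- The Poisson integral at `((x', y), v)` in the scaled boundary variable `s = (x' - t') / y`,
with the integral over the sphere evaluated by the reproducing property. Unlike `PHint`, it is
meaningful up to the boundary `y = 0`. -/
def scaledPoisson (d k : ℕ) (f : Evec d → Evec (d + 1) → ℝ)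
    (p : (Evec d × ℝ) × Evec (d + 1)) : ℝ :=
  cmk (d + 1) k *
    ∫ s : Evec d, poissonWeight d s * f (p.1.1 - p.1.2 • s) (reflv (upP d s 1) p.2)

lemma integral_PH_mul (hZ : IsZk (d + 1) k Z) {t : Evec d}
    (hft : ∃ q, IsHk (d + 1) k q ∧ ∀ u ∈ closedBall (0 : Evec (d + 1)) 1, f t u = q u)
    (x : Evec d) (y : ℝ) {v : Evec (d + 1)} (hv : ‖v‖ ≤ 1) :
    ∫ u, PH d k Z x y t u v * f t u ∂(sphereM (d + 1)) =
      cmk (d + 1) k * (y / ‖upP d (x - t) y‖ ^ (d + 1) * f t (reflv (upP d (x - t) y) v)) := by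
  obtain ⟨q, hq, hfq⟩ := hft
  have hball : reflv (upP d (x - t) y) v ∈ closedBall (0 : Evec (d + 1)) 1 := by
    simpa [norm_reflv] using hv
  rw [hfq _ hball, ← integral_IsZk_reflv_mul hZ hq, ← mul_assoc, ← integral_const_mul]
  refine integral_congr_ae ?_
  filter_upwards [ae_sphereM_norm_eq_one] with u hu
  rw [hfq u (by simp [hu]), PH, upP_sub, sub_zero, mul_assoc]

lemma PHint_eq_scaledPoisson (hZ : IsZk (d + 1) k Z)
    (hfH : ∀ t, ∃ q, IsHk (d + 1) k q ∧ ∀ u ∈ closedBall (0 : Evec (d + 1)) 1, f t u = q u)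
    (x : Evec d) {y : ℝ} (hy : 0 < y) {v : Evec (d + 1)} (hv : ‖v‖ ≤ 1) :
    PHint d k Z f x y v = scaledPoisson d k f ((x, y), v) := by
  set F : Evec d → ℝ := fun t =>
    y / ‖upP d t y‖ ^ (d + 1) * f (x - t) (reflv (upP d t y) v) with hF
  have hsphere : PHint d k Z f x y v = cmk (d + 1) k * ∫ t, F (x - t) := by
    simp only [PHint, integral_PH_mul hZ (hfH _) x y hv, integral_const_mul, hF, sub_sub_cancel]
  have hscale : ∫ t, F t = ∫ s : Evec d, y ^ d * F (y • s) := by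
    have hyd : 0 < y ^ d := pow_pos hy d
    rw [integral_const_mul, Measure.integral_comp_smul, finrank_euclideanSpace_fin,
      abs_of_pos (inv_pos.2 hyd), smul_eq_mul, mul_inv_cancel_left₀ hyd.ne']
  rw [hsphere, integral_sub_left_eq_self, hscale, scaledPoisson]
  congr 2 with s
  have hnorm : ‖upP d s 1‖ ≠ 0 := norm_ne_zero_iff.2 (upP_one_ne_zero s)
  simp only [hF, upP_smul_self, reflv_smul_left hy.ne', norm_smul, Real.norm_of_nonneg hy.le,
    poissonWeight_eq_norm_upP_pow]
  field_simp
  ring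

lemma continuous_reflv_upP_one :
    Continuous fun z : Evec d × Evec (d + 1) => reflv (upP d z.1 1) z.2 := by
  have hup : Continuous fun z : Evec d × Evec (d + 1) => upP d z.1 1 :=
    continuous_upP.comp (continuous_fst.prodMk continuous_const)
  have hne (z : Evec d × Evec (d + 1)) : ‖upP d z.1 1‖ ^ 2 ≠ 0 :=
    pow_ne_zero 2 (norm_ne_zero_iff.2 (upP_one_ne_zero z.1))
  unfold reflv
  fun_prop (disch := exact hne _)

lemma continuousOn_scaledPoisson
    (hfc : ContinuousOn (fun q : Evec d × Evec (d + 1) => f q.1 q.2)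
      (Set.univ ×ˢ closedBall 0 1))
    {M : ℝ} (hM : ∀ t u, ‖u‖ ≤ 1 → |f t u| ≤ M) :
    ContinuousOn (scaledPoisson d k f) (Set.univ ×ˢ closedBall 0 1) := by
  have hmaps {p : (Evec d × ℝ) × Evec (d + 1)} (hp : p ∈ Set.univ ×ˢ closedBall 0 1)
      (s : Evec d) : (p.1.1 - p.1.2 • s, reflv (upP d s 1) p.2) ∈
        (Set.univ ×ˢ closedBall 0 1 : Set (Evec d × Evec (d + 1))) := by
    simpa [norm_reflv] using hp
  have hshift : Continuous fun z : ((Evec d × ℝ) × Evec (d + 1)) × Evec d =>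
      (z.1.1.1 - z.1.1.2 • z.2, reflv (upP d z.2 1) z.1.2) :=
    (by fun_prop : Continuous fun z : ((Evec d × ℝ) × Evec (d + 1)) × Evec d =>
      z.1.1.1 - z.1.1.2 • z.2).prodMk
        (continuous_reflv_upP_one.comp (continuous_snd.prodMk (by fun_prop)))
  refine continuousOn_const.mul (continuousOn_of_dominated
    (bound := fun s => poissonWeight d s * M) (fun p hp => ?_) (fun p hp => ae_of_all _ fun s => ?_)
    (integrable_poissonWeight.mul_const M) (ae_of_all _ fun s => ?_))
  · exact (continuous_poissonWeight.mul (hfc.comp_continuous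
      (hshift.comp (continuous_const.prodMk continuous_id)) (hmaps hp))).aestronglyMeasurable
  · rw [norm_mul, Real.norm_of_nonneg (poissonWeight_nonneg s)]
    exact mul_le_mul_of_nonneg_left (hM _ _ (by simpa using hmaps hp s)) (poissonWeight_nonneg s)
  · exact continuousOn_const.mul (hfc.comp
      (hshift.comp (continuous_id.prodMk continuous_const)).continuousOn fun p hp => hmaps hp s)

lemma integral_poissonWeight_mul_reflv {q : Evec (d + 1) → ℝ} (hq : IsHk (d + 1) k q)
    (v : Evec (d + 1)) :
    2 * ∫ s : Evec d, poissonWeight d s * q (reflv (upP d s 1) v) =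
      ∫ u, q (reflv u v) ∂(sphereM (d + 1)) := by
  obtain ⟨M, hM⟩ := (isCompact_closedBall (0 : Evec (d + 1)) ‖v‖).exists_bound_of_continuousOn
    hq.continuous.continuousOn
  have hmeas : Measurable fun x : Evec (d + 1) => reflv x v := by
    unfold reflv
    fun_prop
  exact integral_poissonWeight_mul (hq.continuous.measurable.comp hmeas)
    (fun x => hM _ (by simp [norm_reflv])) fun r x hr => by
      simp only [Function.comp_apply, reflv_smul_left hr]

lemma scaledPoisson_zero (hm : 3 ≤ d + 1) {a : Evec d}
    (hfa : ∃ q, IsHk (d + 1) k q ∧ ∀ u ∈ closedBall (0 : Evec (d + 1)) 1, f a u = q u)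
    {v : Evec (d + 1)} (hv : ‖v‖ ≤ 1) : scaledPoisson d k f ((a, 0), v) = f a v := by
  obtain ⟨q, hq, hfq⟩ := hfa
  have hball (x : Evec (d + 1)) : reflv x v ∈ closedBall (0 : Evec (d + 1)) 1 := by
    simpa [norm_reflv] using hv
  have hω := omegaS_pos (m := d + 1)
  have hd : (3 : ℝ) ≤ ((d + 1 : ℕ) : ℝ) := by exact_mod_cast hm
  have hd2 : ((d + 1 : ℕ) : ℝ) - 2 ≠ 0 := by linarith
  have haverage := integral_reflv hq v
  rw [← integral_poissonWeight_mul_reflv hq] at haverage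
  rw [hfq v (by simpa using hv), scaledPoisson, cmk]
  simp only [zero_smul, sub_zero, hfq _ (hball _)]
  field_simp
  linear_combination haverage

end PoissonIntegral

theorem stmt_3_general (d k : ℕ) (hm : 3 ≤ d + 1)
    (Z : Evec (d + 1) → Evec (d + 1) → ℝ) (hZ : IsZk (d + 1) k Z)
    (f : Evec d → Evec (d + 1) → ℝ)
    (hfc : ContinuousOn (fun q : Evec d × Evec (d + 1) => f q.1 q.2)
      (Set.univ ×ˢ closedBall (0 : Evec (d + 1)) 1))
    (hfb : ∃ M : ℝ, ∀ (x' : Evec d) (u : Evec (d + 1)), ‖u‖ ≤ 1 → |f x' u| ≤ M)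
    (hfH : ∀ x' : Evec d, ∃ q, IsHk (d + 1) k q ∧
      ∀ u ∈ closedBall (0 : Evec (d + 1)) 1, f x' u = q u) :
    ContinuousOn
      (fun p : (Evec d × ℝ) × Evec (d + 1) =>
        if 0 < p.1.2 then PHint d k Z f p.1.1 p.1.2 p.2 else f p.1.1 p.2)
      ({x : Evec d × ℝ | 0 ≤ x.2} ×ˢ closedBall (0 : Evec (d + 1)) 1) := by
  obtain ⟨M, hM⟩ := hfb
  refine ((continuousOn_scaledPoisson (k := k) hfc hM).mono
    (Set.prod_mono_left (Set.subset_univ _))).congr ?_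
  rintro ⟨⟨x, y⟩, v⟩ ⟨hy, hv⟩
  have hv' : ‖v‖ ≤ 1 := mem_closedBall_zero_iff.1 hv
  rcases (show 0 ≤ y from hy).lt_or_eq with hpos | hzero
  · exact (if_pos hpos).trans (PHint_eq_scaledPoisson hZ hfH x hpos hv')
  · obtain rfl : 0 = y := hzero
    exact (if_neg (lt_irrefl _)).trans (scaledPoisson_zero hm (hfH x) hv').symm

/-- boundary continuity of the half-space Poisson integral with
continuous bounded data. Here `m = d+1 ≥ 3`. -/
theorem stmt_3 (d k : ℕ) (hm : 3 ≤ d + 1) (hk : 1 ≤ k)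
    (Z : Evec (d + 1) → Evec (d + 1) → ℝ) (hZ : IsZk (d + 1) k Z)
    (f : Evec d → Evec (d + 1) → ℝ)
    (hfc : ContinuousOn (fun q : Evec d × Evec (d + 1) => f q.1 q.2)
      (Set.univ ×ˢ closedBall (0 : Evec (d + 1)) 1))
    (hfb : ∃ M : ℝ, ∀ (x' : Evec d) (u : Evec (d + 1)), ‖u‖ ≤ 1 → |f x' u| ≤ M)
    (hfH : ∀ x' : Evec d, ∃ q, IsHk (d + 1) k q ∧
      ∀ u ∈ closedBall (0 : Evec (d + 1)) 1, f x' u = q u) :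
    (∀ (a : Evec d) (v : Evec (d + 1)), ‖v‖ < 1 →
      Tendsto (fun x : Evec d × ℝ => PHint d k Z f x.1 x.2 v)
        (𝓝[{x : Evec d × ℝ | 0 < x.2}] (a, 0)) (𝓝 (f a v))) ∧
    (∀ v : Evec (d + 1), ‖v‖ < 1 →
      ContinuousOn
        (fun x : Evec d × ℝ => if 0 < x.2 then PHint d k Z f x.1 x.2 v else f x.1 v)
        {x : Evec d × ℝ | 0 ≤ x.2}) := by
  have hcont (v : Evec (d + 1)) (hv : ‖v‖ < 1) : ContinuousOn
      (fun x : Evec d × ℝ => if 0 < x.2 then PHint d k Z f x.1 x.2 v else f x.1 v)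
      {x : Evec d × ℝ | 0 ≤ x.2} :=
    (stmt_3_general d k hm Z hZ f hfc hfb hfH).comp (f := fun x : Evec d × ℝ => (x, v))
      (by fun_prop) fun x hx => ⟨hx, mem_closedBall_zero_iff.2 hv.le⟩
  refine ⟨fun a v hv => ?_, hcont⟩
  have hlim := ((hcont v hv (a, 0) (le_refl (0 : ℝ))).mono fun x (hx : 0 < x.2) => hx.le).tendsto
  simp only [lt_irrefl, if_false] at hlim
  exact hlim.congr' (eventually_nhdsWithin_of_forall fun x hx => if_pos hx)
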